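/- Let s ∈ ℝ and α_n = 2^{-n}. There exists a constant C = C(φ) > 0 such that liminf_{n→∞} ‖α_n² ∂_x² (1 − α_n² ∂_x²)^{-1} (g_n ∂_x f_n)‖_{H^s(ℝ)} ≥ C, where f_n(x) = 2^{-ns} φ(x) sin((17/12)·2^n x) and g_n(x) = 2^{-n} φ(x). -/

import Mathlib

open MeasureTheory Filter

/-- Fourier transform with convention `f̂(ξ) = ∫ f(x) e^{-i x ξ} dx`. -/
noncomputable def fourierT (f : ℝ → ℂ) (ξ : ℝ) : ℂ :=
  ∫ x : ℝ, f x * Complex.exp (-(Complex.I * x * ξ))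

/-- The `H^s(ℝ)` norm, `‖f‖_{H^s}² = ∫ (1+|ξ|²)^s |f̂(ξ)|² dξ`. -/
noncomputable def sobolevNorm (s : ℝ) (f : ℝ → ℂ) : ℝ :=
  Real.sqrt (∫ ξ : ℝ, (1 + ξ ^ 2) ^ s * ‖fourierT f ξ‖ ^ 2)

/-- Membership in `H^s(ℝ)` (for integrable representatives). -/
def MemSobolev (s : ℝ) (f : ℝ → ℂ) : Prop :=
  MeasureTheory.Integrable f ∧
    MeasureTheory.Integrable (fun ξ : ℝ => (1 + ξ ^ 2) ^ s * ‖fourierT f ξ‖ ^ 2)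

/-- The high-frequency functions `f_n(x) = 2^{-ns} φ(x) sin((17/12)·2^n x)`. -/
noncomputable def fn (s : ℝ) (φ : ℝ → ℂ) (n : ℕ) : ℝ → ℂ :=
  fun x => (((2 : ℝ) ^ (-(n : ℝ) * s) * Real.sin (17 / 12 * 2 ^ n * x) : ℝ) : ℂ) * φ x

/-- The low-frequency functions `g_n(x) = 2^{-n} φ(x)`. -/
noncomputable def gn (φ : ℝ → ℂ) (n : ℕ) : ℝ → ℂ :=
  fun x => (((2 : ℝ) ^ (-(n : ℝ)) : ℝ) : ℂ) * φ x

/-- `φ̂` is an even, real-valued, nonnegative function in `C_c^∞(ℝ)` with `φ̂ = 1` on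
`{|ξ| ≤ 1/4}` and `φ̂ = 0` on `{|ξ| ≥ 1/2}`, and `φ` is the (continuous, integrable)
function on `ℝ` whose Fourier transform is `φ̂`. -/
structure CutoffPair (φhat : ℝ → ℝ) (φ : ℝ → ℂ) : Prop where
  smooth : ContDiff ℝ (⊤ : ℕ∞) φhat
  compactSupport : HasCompactSupport φhat
  even : ∀ ξ : ℝ, φhat (-ξ) = φhat ξ
  nonneg : ∀ ξ : ℝ, 0 ≤ φhat ξ
  eq_one : ∀ ξ : ℝ, |ξ| ≤ 1 / 4 → φhat ξ = 1
  eq_zero : ∀ ξ : ℝ, 1 / 2 ≤ |ξ| → φhat ξ = 0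
  continuous : Continuous φ
  integrable : MeasureTheory.Integrable φ
  fourier_eq : ∀ ξ : ℝ, fourierT φ ξ = (φhat ξ : ℂ)

/-- The `H^s` norm of the image of `f` under the Fourier multiplier with symbol `m`,
i.e. `(∫ (1+|ξ|²)^s |m(ξ) f̂(ξ)|² dξ)^{1/2}`. -/
noncomputable def multSobolevNorm (s : ℝ) (m : ℝ → ℂ) (f : ℝ → ℂ) : ℝ :=
  Real.sqrt (∫ ξ : ℝ, (1 + ξ ^ 2) ^ s * ‖m ξ * fourierT f ξ‖ ^ 2)

/-!
Write `ρ = 2^n`, `κ = 17/12`, and let `A` be the Fourier transform of `φ²`. The product rule turns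
the Fourier transform of `g_n ∂_x f_n` into a difference of two copies of `A`, centred at `±κρ`,
with prefactors `ρ^{-s} (ξ ± κρ)/(4ρ)`. The multiplier is a fixed symbol evaluated at `ξ/ρ`, and
`(1 + ξ²)^s ρ^{-2s} = ((1 + ξ²)/ρ²)^s`, so near `ξ = κρ` every factor has a limit as `ρ → ∞`:
after the translation `ξ = η + κρ` the integrand of the squared norm converges pointwise to a
positive multiple of `|A(η)|²`, and Fatou's lemma bounds the norms from below. Peetre's inequality
dominates the integrands by translates of one integrable function; this shows that the norms are
bounded, without which the real-valued `liminf` would be a junk value.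
-/

open scoped FourierTransform SchwartzMap Topology

section FourierTransform

variable {f g : ℝ → ℂ}

lemma fourierT_eq_fourier (f : ℝ → ℂ) (ξ : ℝ) :
    fourierT f ξ = 𝓕 f (ξ / (2 * Real.pi)) := by
  rw [Real.fourier_real_eq_integral_exp_smul, fourierT]
  congr 1 with x
  rw [smul_eq_mul, mul_comm]
  congr 2
  push_cast
  field_simp

lemma fourier_eq_fourierT (f : ℝ → ℂ) (ξ : ℝ) :
    𝓕 f ξ = fourierT f (ξ * (2 * Real.pi)) := by
  rw [fourierT_eq_fourier, mul_div_cancel_right₀ _ Real.two_pi_pos.ne']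

lemma integrable_mul_exp_neg_I_mul (hf : Integrable f) (ξ : ℝ) :
    Integrable fun x : ℝ => f x * Complex.exp (-(Complex.I * x * ξ)) := by
  refine hf.mul_bdd (c := 1) (by fun_prop) (ae_of_all _ fun x => ?_)
  simp [Complex.norm_exp]

lemma integrable_exp_I_mul_mul (hf : Integrable f) (ω : ℝ) :
    Integrable fun x : ℝ => Complex.exp (Complex.I * ω * x) * f x := by
  refine hf.bdd_mul (c := 1) (by fun_prop) (ae_of_all _ fun x => ?_)
  simp [Complex.norm_exp]

lemma fourierT_add (hf : Integrable f) (hg : Integrable g) (ξ : ℝ) :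
    fourierT (fun x => f x + g x) ξ = fourierT f ξ + fourierT g ξ := by
  simp only [fourierT, add_mul]
  exact integral_add (integrable_mul_exp_neg_I_mul hf ξ) (integrable_mul_exp_neg_I_mul hg ξ)

lemma fourierT_const_mul (c : ℂ) (f : ℝ → ℂ) (ξ : ℝ) :
    fourierT (fun x => c * f x) ξ = c * fourierT f ξ := by
  simp only [fourierT, mul_assoc, integral_const_mul]

lemma fourierT_exp_mul (f : ℝ → ℂ) (ω ξ : ℝ) :
    fourierT (fun x => Complex.exp (Complex.I * ω * x) * f x) ξ = fourierT f (ξ - ω) := by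
  simp only [fourierT]
  congr 1 with x
  rw [mul_comm (Complex.exp _) (f x), mul_assoc, ← Complex.exp_add]
  congr 2
  push_cast
  ring

lemma fourierT_deriv (hf : Integrable f) (hfd : Differentiable ℝ f)
    (hf' : Integrable (deriv f)) (ξ : ℝ) :
    fourierT (deriv f) ξ = Complex.I * ξ * fourierT f ξ := by
  rw [fourierT_eq_fourier, fourierT_eq_fourier, Real.fourier_deriv hf hfd hf']
  push_cast [smul_eq_mul]
  field_simp

lemma fourierT_exp_add_exp_neg_mul (hf : Integrable f) (a b : ℂ) (ω ξ : ℝ) :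
    fourierT (fun x => (a * Complex.exp (Complex.I * ω * x) +
        b * Complex.exp (Complex.I * (-ω : ℝ) * x)) * f x) ξ =
      a * fourierT f (ξ - ω) + b * fourierT f (ξ + ω) := by
  simp only [add_mul, mul_assoc _ _ (f _)]
  rw [fourierT_add ((integrable_exp_I_mul_mul hf ω).const_mul a)
    ((integrable_exp_I_mul_mul hf (-ω)).const_mul b), fourierT_const_mul, fourierT_const_mul,
    fourierT_exp_mul, fourierT_exp_mul, sub_neg_eq_add]

lemma integrable_cos_mul (hf : Integrable f) (ω : ℝ) :
    Integrable fun x => (Real.cos (ω * x) : ℂ) * f x := by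
  refine hf.bdd_mul (c := 1) (by fun_prop) (ae_of_all _ fun x => ?_)
  rw [Complex.norm_real]
  exact Real.abs_cos_le_one _

lemma integrable_sin_mul (hf : Integrable f) (ω : ℝ) :
    Integrable fun x => (Real.sin (ω * x) : ℂ) * f x := by
  refine hf.bdd_mul (c := 1) (by fun_prop) (ae_of_all _ fun x => ?_)
  rw [Complex.norm_real]
  exact Real.abs_sin_le_one _

lemma fourierT_cos_mul (hf : Integrable f) (ω ξ : ℝ) :
    fourierT (fun x => (Real.cos (ω * x) : ℂ) * f x) ξ =
      (fourierT f (ξ - ω) + fourierT f (ξ + ω)) / 2 := by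
  convert fourierT_exp_add_exp_neg_mul hf (1 / 2) (1 / 2) ω ξ using 1
  · congr 1 with x
    rw [Complex.ofReal_cos, Complex.cos]
    push_cast
    ring_nf
  · ring

lemma fourierT_sin_mul (hf : Integrable f) (ω ξ : ℝ) :
    fourierT (fun x => (Real.sin (ω * x) : ℂ) * f x) ξ =
      (fourierT f (ξ - ω) - fourierT f (ξ + ω)) * (-Complex.I / 2) := by
  convert fourierT_exp_add_exp_neg_mul hf (-Complex.I / 2) (Complex.I / 2) ω ξ using 1
  · congr 1 with x
    rw [Complex.ofReal_sin, Complex.sin]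
    push_cast
    ring_nf
  · ring

lemma exists_schwartzMap_eq_fourierT (f : 𝓢(ℝ, ℂ)) : ∃ F : 𝓢(ℝ, ℂ), ⇑F = fourierT f := by
  let dilation : ℝ ≃L[ℝ] ℝ :=
    ContinuousLinearEquiv.unitsEquivAut ℝ (Units.mk0 _ (inv_ne_zero Real.two_pi_pos.ne'))
  refine ⟨SchwartzMap.compCLMOfContinuousLinearEquiv ℂ dilation (𝓕 f), funext fun ξ => ?_⟩
  rw [fourierT_eq_fourier, ← SchwartzMap.fourier_coe]
  rfl

lemma exists_schwartzMap_eq_of_fourierT_eq (hfc : Continuous f) (hf : Integrable f)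
    (F : 𝓢(ℝ, ℂ)) (hF : fourierT f = F) : ∃ Φ : 𝓢(ℝ, ℂ), ⇑Φ = f := by
  let dilation : ℝ ≃L[ℝ] ℝ :=
    ContinuousLinearEquiv.unitsEquivAut ℝ (Units.mk0 _ Real.two_pi_pos.ne')
  let Ψ : 𝓢(ℝ, ℂ) := SchwartzMap.compCLMOfContinuousLinearEquiv ℂ dilation F
  have hΨ : 𝓕 f = Ψ := funext fun ξ => by
    rw [fourier_eq_fourierT, hF]
    rfl
  refine ⟨𝓕⁻ Ψ, ?_⟩
  rw [SchwartzMap.fourierInv_coe, ← hΨ]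
  exact hfc.fourierInv_fourier_eq hf (hΨ ▸ Ψ.integrable)

lemma fourierT_ne_zero {f : 𝓢(ℝ, ℂ)} (hf : f ≠ 0) : fourierT f ≠ 0 := by
  contrapose! hf
  have hfourier : 𝓕 f = 0 := by
    ext ξ
    rw [SchwartzMap.fourier_coe, fourier_eq_fourierT, hf]
    rfl
  calc f = 𝓕⁻ (𝓕 f) := (FourierTransform.fourierInv_fourier_eq f).symm
    _ = 0 := by rw [hfourier, FourierTransform.fourierInv_zero]

end FourierTransform

namespace CutoffPair

variable {φhat : ℝ → ℝ} {φ : ℝ → ℂ}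

lemma exists_schwartzMap (hφ : CutoffPair φhat φ) : ∃ Φ : 𝓢(ℝ, ℂ), ⇑Φ = φ := by
  have hsupp : HasCompactSupport fun ξ => (φhat ξ : ℂ) :=
    hφ.compactSupport.comp_left (g := Complex.ofReal) Complex.ofReal_zero
  have hsmooth : ContDiff ℝ (⊤ : ℕ∞) fun ξ => (φhat ξ : ℂ) :=
    Complex.ofRealCLM.contDiff.comp hφ.smooth
  exact exists_schwartzMap_eq_of_fourierT_eq hφ.continuous hφ.integrable
    (hsupp.toSchwartzMap hsmooth) (funext hφ.fourier_eq)

lemma ne_zero (hφ : CutoffPair φhat φ) : φ ≠ 0 := by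
  rintro rfl
  have h := hφ.fourier_eq 0
  rw [hφ.eq_one 0 (by norm_num)] at h
  simp [fourierT] at h

end CutoffPair

section Interaction

/-- The high-frequency oscillation `ρ^{-s} f(x) sin(κρx)` with frequency scale `ρ`; the functions
`f_n` are the case `κ = 17/12`, `ρ = 2^n`. -/
noncomputable def wavePacket (s κ ρ : ℝ) (f : ℝ → ℂ) (x : ℝ) : ℂ :=
  ((ρ ^ (-s) * Real.sin (κ * ρ * x) : ℝ) : ℂ) * f x

/-- The product of the low-frequency function `ρ⁻¹ f` with the derivative of the wave packet, which
specializes to `g_n ∂_x f_n`. -/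
noncomputable def packetInteraction (s κ ρ : ℝ) (f : ℝ → ℂ) (x : ℝ) : ℂ :=
  ((ρ⁻¹ : ℝ) : ℂ) * f x * deriv (wavePacket s κ ρ f) x

/-- The bump `A` moved to the frequency `κρ`, with the factor `(ξ + κρ)/ρ` produced by the
derivative in `packetInteraction`. -/
noncomputable def sideband (κ ρ : ℝ) (A : ℝ → ℂ) (ξ : ℝ) : ℂ :=
  ((ρ⁻¹ * (ξ + κ * ρ) : ℝ) : ℂ) * A (ξ - κ * ρ)

lemma hasDerivAt_ofReal_sin_mul (ω x : ℝ) :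
    HasDerivAt (fun y : ℝ => (Real.sin (ω * y) : ℂ)) (ω * Real.cos (ω * x)) x := by
  have h := ((hasDerivAt_id x).const_mul ω).sin.ofReal_comp
  simpa [mul_comm] using h

lemma deriv_sin_mul {f : ℝ → ℂ} {x : ℝ} (hf : DifferentiableAt ℝ f x) (ω : ℝ) :
    deriv (fun y => (Real.sin (ω * y) : ℂ) * f y) x =
      ω * (Real.cos (ω * x) * f x) + Real.sin (ω * x) * deriv f x := by
  rw [((hasDerivAt_ofReal_sin_mul ω x).fun_mul hf.hasDerivAt).deriv, mul_assoc]

-- `f ∂(f sin) = (∂(f² sin) + f² ∂sin) / 2`, so only the Fourier transform of `f²` is needed.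
lemma packetInteraction_eq {f : ℝ → ℂ} (hf : Differentiable ℝ f) (s κ ρ x : ℝ) :
    packetInteraction s κ ρ f x = ((ρ⁻¹ * ρ ^ (-s) / 2 : ℝ) : ℂ) *
      (deriv (fun y => (Real.sin (κ * ρ * y) : ℂ) * f y ^ 2) x +
        ((κ * ρ : ℝ) : ℂ) * (Real.cos (κ * ρ * x) * f x ^ 2)) := by
  have hpacket : wavePacket s κ ρ f =
      fun y => ((ρ ^ (-s) : ℝ) : ℂ) * ((Real.sin (κ * ρ * y) : ℂ) * f y) := by
    ext y
    rw [wavePacket, Complex.ofReal_mul, mul_assoc]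
  have hsq : deriv (fun y => f y ^ 2) x = 2 * f x * deriv f x := by
    simpa using ((hf x).hasDerivAt.fun_pow 2).deriv
  rw [packetInteraction, hpacket, deriv_const_mul_field, deriv_sin_mul (hf x),
    deriv_sin_mul ((hf x).fun_pow 2), hsq]
  push_cast
  ring

lemma fourierT_packetInteraction {f : ℝ → ℂ} (hf : Differentiable ℝ f)
    (hsq : Integrable fun x => f x ^ 2) (hsq' : Integrable (deriv fun x => f x ^ 2))
    (s κ ρ ξ : ℝ) :
    fourierT (packetInteraction s κ ρ f) ξ = ((ρ ^ (-s) / 4 : ℝ) : ℂ) *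
      (sideband κ ρ (fourierT fun x => f x ^ 2) ξ -
        sideband (-κ) ρ (fourierT fun x => f x ^ 2) ξ) := by
  have hd : Differentiable ℝ fun x => f x ^ 2 := hf.fun_pow 2
  have hsin_diff : Differentiable ℝ fun x => (Real.sin (κ * ρ * x) : ℂ) * f x ^ 2 :=
    fun x => ((hasDerivAt_ofReal_sin_mul _ x).differentiableAt).mul (hd x)
  have hsin_deriv : Integrable (deriv fun x => (Real.sin (κ * ρ * x) : ℂ) * f x ^ 2) := by
    rw [funext fun x => deriv_sin_mul (hd x) (κ * ρ)]
    exact ((integrable_cos_mul hsq _).const_mul _).add (integrable_sin_mul hsq' _)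
  rw [funext (packetInteraction_eq hf s κ ρ), fourierT_const_mul,
    fourierT_add hsin_deriv ((integrable_cos_mul hsq _).const_mul _), fourierT_const_mul,
    fourierT_deriv (integrable_sin_mul hsq _) hsin_diff hsin_deriv, fourierT_sin_mul hsq,
    fourierT_cos_mul hsq, sideband, sideband, neg_mul, sub_neg_eq_add]
  push_cast
  linear_combination (-(ρ : ℂ)⁻¹ * ((ρ ^ (-s) : ℝ) : ℂ) * ξ / 4 *
    (fourierT (fun x => f x ^ 2) (ξ - κ * ρ) - fourierT (fun x => f x ^ 2) (ξ + κ * ρ))) *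
    Complex.I_sq

end Interaction

section Weight

lemma one_add_norm_sq_le_two_mul {E : Type*} [SeminormedAddCommGroup E] (x y : E) :
    1 + ‖x‖ ^ 2 ≤ 2 * ((1 + ‖y‖ ^ 2) * (1 + ‖x - y‖ ^ 2)) := by
  have htri : ‖x‖ ≤ ‖y‖ + ‖x - y‖ := norm_le_norm_add_norm_sub' x y
  have hsq : ‖x‖ ^ 2 ≤ 2 * (‖y‖ ^ 2 + ‖x - y‖ ^ 2) :=
    (pow_le_pow_left₀ (norm_nonneg x) htri 2).trans add_sq_le
  nlinarith [mul_nonneg (sq_nonneg ‖y‖) (sq_nonneg ‖x - y‖)]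

-- Peetre's inequality; for negative `s` the roles of `x` and `y` are exchanged.
lemma one_add_norm_sq_rpow_le {E : Type*} [SeminormedAddCommGroup E] (s : ℝ) (x y : E) :
    (1 + ‖x‖ ^ 2) ^ s ≤ 2 ^ |s| * ((1 + ‖y‖ ^ 2) ^ s * (1 + ‖x - y‖ ^ 2) ^ |s|) := by
  rcases le_total 0 s with hs | hs
  · rw [abs_of_nonneg hs, ← Real.mul_rpow (by positivity) (by positivity),
      ← Real.mul_rpow (by positivity) (by positivity)]
    exact Real.rpow_le_rpow (by positivity) (one_add_norm_sq_le_two_mul x y) hs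
  · have hswap : (1 + ‖y‖ ^ 2) ^ (-s) ≤
        2 ^ (-s) * ((1 + ‖x‖ ^ 2) ^ (-s) * (1 + ‖x - y‖ ^ 2) ^ (-s)) := by
      rw [← Real.mul_rpow (by positivity) (by positivity),
        ← Real.mul_rpow (by positivity) (by positivity), norm_sub_rev]
      exact Real.rpow_le_rpow (by positivity) (one_add_norm_sq_le_two_mul y x) (neg_nonneg.2 hs)
    have hcancel : ∀ z : E, (1 + ‖z‖ ^ 2) ^ s * (1 + ‖z‖ ^ 2) ^ (-s) = 1 := fun z => by
      rw [← Real.rpow_add (by positivity), add_neg_cancel, Real.rpow_zero]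
    rw [abs_of_nonpos hs]
    calc (1 + ‖x‖ ^ 2) ^ s
        = (1 + ‖x‖ ^ 2) ^ s * (1 + ‖y‖ ^ 2) ^ s * (1 + ‖y‖ ^ 2) ^ (-s) := by
          rw [mul_assoc, hcancel, mul_one]
      _ ≤ (1 + ‖x‖ ^ 2) ^ s * (1 + ‖y‖ ^ 2) ^ s *
          (2 ^ (-s) * ((1 + ‖x‖ ^ 2) ^ (-s) * (1 + ‖x - y‖ ^ 2) ^ (-s))) := by gcongr
      _ = 2 ^ (-s) * ((1 + ‖y‖ ^ 2) ^ s * (1 + ‖x - y‖ ^ 2) ^ (-s)) := by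
          linear_combination
            (2 ^ (-s) * ((1 + ‖y‖ ^ 2) ^ s * (1 + ‖x - y‖ ^ 2) ^ (-s))) * hcancel x

lemma rpow_le_rpow_add_rpow {a b x : ℝ} (s : ℝ) (ha : 0 < a) (hax : a ≤ x) (hxb : x ≤ b) :
    x ^ s ≤ a ^ s + b ^ s := by
  have hx : 0 < x := ha.trans_le hax
  have hb : 0 < b := hx.trans_le hxb
  rcases le_total 0 s with hs | hs
  · exact (Real.rpow_le_rpow hx.le hxb hs).trans (le_add_of_nonneg_left (by positivity))
  · exact (Real.rpow_le_rpow_of_nonpos ha hax hs).trans (le_add_of_nonneg_right (by positivity))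

lemma exists_rescaled_weight_le (s : ℝ) {κ : ℝ} (hκ : κ ≠ 0) :
    ∃ K : ℝ, 0 ≤ K ∧ ∀ ρ : ℝ, 1 ≤ ρ → ∀ ξ : ℝ,
      ((1 + ξ ^ 2) / ρ ^ 2) ^ s ≤ K * (1 + (ξ - κ * ρ) ^ 2) ^ |s| := by
  refine ⟨2 ^ |s| * ((κ ^ 2) ^ s + (1 + κ ^ 2) ^ s), by positivity, fun ρ hρ ξ => ?_⟩
  have : 0 < ρ := one_pos.trans_le hρ
  have hcenter : ((1 + (κ * ρ) ^ 2) / ρ ^ 2) ^ s ≤ (κ ^ 2) ^ s + (1 + κ ^ 2) ^ s := by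
    refine rpow_le_rpow_add_rpow s (by positivity) ?_ ?_
    · rw [le_div_iff₀ (by positivity)]
      linarith [mul_pow κ ρ 2]
    · rw [div_le_iff₀ (by positivity)]
      nlinarith [mul_pow κ ρ 2]
  have hpeetre := one_add_norm_sq_rpow_le s ξ (κ * ρ)
  simp only [Real.norm_eq_abs, sq_abs] at hpeetre
  calc ((1 + ξ ^ 2) / ρ ^ 2) ^ s
      = (1 + ξ ^ 2) ^ s / (ρ ^ 2) ^ s := Real.div_rpow (by positivity) (by positivity) s
    _ ≤ 2 ^ |s| * ((1 + (κ * ρ) ^ 2) ^ s * (1 + (ξ - κ * ρ) ^ 2) ^ |s|) / (ρ ^ 2) ^ s := by gcongr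
    _ = 2 ^ |s| * ((1 + (κ * ρ) ^ 2) / ρ ^ 2) ^ s * (1 + (ξ - κ * ρ) ^ 2) ^ |s| := by
        rw [Real.div_rpow (by positivity) (by positivity)]
        ring
    _ ≤ 2 ^ |s| * ((κ ^ 2) ^ s + (1 + κ ^ 2) ^ s) * (1 + (ξ - κ * ρ) ^ 2) ^ |s| := by gcongr

lemma integrable_one_add_sq_rpow_mul_norm_sq (A : 𝓢(ℝ, ℂ)) (t : ℝ) :
    Integrable fun η : ℝ => (1 + η ^ 2) ^ t * ‖A η‖ ^ 2 := by
  have hweight : (fun η : ℝ => (1 + ‖η‖ ^ 2) ^ (t / 2)).HasTemperateGrowth :=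
    Function.hasTemperateGrowth_one_add_norm_sq_rpow ℝ (t / 2)
  have hint := ((SchwartzMap.smulLeftCLM ℂ (fun η : ℝ => (1 + ‖η‖ ^ 2) ^ (t / 2)) A).memLp
    2).integrable_norm_pow two_ne_zero
  refine hint.congr (ae_of_all _ fun η => ?_)
  dsimp only
  rw [SchwartzMap.smulLeftCLM_apply_apply hweight, norm_smul, mul_pow,
    Real.norm_of_nonneg (by positivity), ← Real.rpow_mul_natCast (by positivity), Nat.cast_ofNat,
    div_mul_cancel₀ t two_ne_zero, Real.norm_eq_abs, sq_abs]

end Weight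

section Fatou

lemma eventually_lt_integral_of_tendsto {α ι : Type*} [MeasurableSpace α] {μ : Measure α}
    {l : Filter ι} [l.IsCountablyGenerated] [l.NeBot] {F : ι → α → ℝ} {G : α → ℝ}
    (hmeas : ∀ i, AEMeasurable (F i) μ) (hnonneg : ∀ i x, 0 ≤ F i x)
    (hint : ∀ᶠ i in l, Integrable (F i) μ) (hG : Integrable G μ)
    (hlim : ∀ x, Tendsto (fun i => F i x) l (𝓝 (G x))) {c : ℝ} (hc : c < ∫ x, G x ∂μ) :
    ∀ᶠ i in l, c < ∫ x, F i x ∂μ := by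
  rcases lt_or_ge c 0 with hc0 | hc0
  · exact .of_forall fun i => hc0.trans_le (integral_nonneg (hnonneg i))
  have hG0 : ∀ x, 0 ≤ G x := fun x => ge_of_tendsto' (hlim x) fun i => hnonneg i x
  have hfatou : ENNReal.ofReal (∫ x, G x ∂μ) ≤
      liminf (fun i => ∫⁻ x, ENNReal.ofReal (F i x) ∂μ) l :=
    calc ENNReal.ofReal (∫ x, G x ∂μ)
        = ∫⁻ x, ENNReal.ofReal (G x) ∂μ :=
          ofReal_integral_eq_lintegral_ofReal hG (ae_of_all _ hG0)
      _ = ∫⁻ x, liminf (fun i => ENNReal.ofReal (F i x)) l ∂μ :=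
          lintegral_congr fun x => (ENNReal.tendsto_ofReal (hlim x)).liminf_eq.symm
      _ ≤ liminf (fun i => ∫⁻ x, ENNReal.ofReal (F i x) ∂μ) l :=
          lintegral_liminf_le' fun i => (hmeas i).ennreal_ofReal
  have hlt : ENNReal.ofReal c < liminf (fun i => ∫⁻ x, ENNReal.ofReal (F i x) ∂μ) l :=
    ((ENNReal.ofReal_lt_ofReal_iff_of_nonneg hc0).2 hc).trans_le hfatou
  filter_upwards [eventually_lt_of_lt_liminf hlt, hint] with i hi hFi
  rwa [← ofReal_integral_eq_lintegral_ofReal hFi (ae_of_all _ (hnonneg i)),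
    ENNReal.ofReal_lt_ofReal_iff_of_nonneg hc0] at hi

end Fatou

section Density

variable {κ ρ B : ℝ} {m A : ℝ → ℂ}

/-- Sixteen times the integrand of `‖m(D/ρ) (packetInteraction s κ ρ f)‖_{H^s}²` on the frequency
side, where `A` is the Fourier transform of `f²`. -/
noncomputable def interactionDensity (s κ ρ : ℝ) (m A : ℝ → ℂ) (ξ : ℝ) : ℝ :=
  ((1 + ξ ^ 2) / ρ ^ 2) ^ s * ‖m (ξ / ρ) * (sideband κ ρ A ξ - sideband (-κ) ρ A ξ)‖ ^ 2

lemma interactionDensity_nonneg (s κ ρ : ℝ) (m A : ℝ → ℂ) (ξ : ℝ) :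
    0 ≤ interactionDensity s κ ρ m A ξ := by
  unfold interactionDensity
  positivity

lemma measurable_interactionDensity (s κ ρ : ℝ) (hm : Measurable m) (hA : Measurable A) :
    Measurable (interactionDensity s κ ρ m A) := by
  unfold interactionDensity sideband
  fun_prop

lemma multSobolevNorm_packetInteraction {f : ℝ → ℂ} (hf : Differentiable ℝ f)
    (hsq : Integrable fun x => f x ^ 2) (hsq' : Integrable (deriv fun x => f x ^ 2))
    (s κ : ℝ) (hρ : 0 < ρ) (m : ℝ → ℂ) :
    multSobolevNorm s (fun ξ => m (ξ / ρ)) (packetInteraction s κ ρ f) =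
      √(∫ ξ, interactionDensity s κ ρ m (fourierT fun x => f x ^ 2) ξ) / 4 := by
  have hscale : (ρ ^ (-s)) ^ 2 = ((ρ ^ 2) ^ s)⁻¹ := by
    rw [Real.rpow_pow_comm hρ.le, Real.rpow_neg (sq_nonneg ρ)]
  have hdensity : ∀ ξ, (1 + ξ ^ 2) ^ s *
      ‖m (ξ / ρ) * fourierT (packetInteraction s κ ρ f) ξ‖ ^ 2 =
        interactionDensity s κ ρ m (fourierT fun x => f x ^ 2) ξ / 4 ^ 2 := by
    intro ξ
    rw [fourierT_packetInteraction hf hsq hsq', interactionDensity,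
      Real.div_rpow (by positivity) (by positivity)]
    simp only [norm_mul, mul_pow, Complex.norm_real,
      Real.norm_of_nonneg (show 0 ≤ ρ ^ (-s) / 4 by positivity), div_pow, hscale]
    ring
  simp only [multSobolevNorm, hdensity, integral_div]
  rw [Real.sqrt_div' _ (by positivity), Real.sqrt_sq zero_le_four]

lemma norm_sideband_le (hρ : 1 ≤ ρ) (κ : ℝ) (A : ℝ → ℂ) (ξ : ℝ) :
    ‖sideband κ ρ A ξ‖ ≤ (1 + 2 * |κ|) * ((1 + (ξ - κ * ρ) ^ 2) * ‖A (ξ - κ * ρ)‖) := by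
  have hρ0 : 0 < ρ := one_pos.trans_le hρ
  set η := ξ - κ * ρ with hη
  have hfactor : |ρ⁻¹ * (ξ + κ * ρ)| ≤ (1 + 2 * |κ|) * (1 + η ^ 2) :=
    calc |ρ⁻¹ * (ξ + κ * ρ)| = |ρ⁻¹ * η + 2 * κ| := by
          congr 1
          rw [hη]
          field_simp
          ring
      _ ≤ ρ⁻¹ * |η| + 2 * |κ| := by
          refine (abs_add_le _ _).trans_eq ?_
          rw [abs_mul, abs_mul, abs_of_pos (inv_pos.2 hρ0), abs_two]
      _ ≤ |η| + 2 * |κ| := by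
          gcongr
          exact mul_le_of_le_one_left (abs_nonneg η) (inv_le_one_of_one_le₀ hρ)
      _ ≤ (1 + 2 * |κ|) * (1 + η ^ 2) := by
          nlinarith [sq_abs η, sq_nonneg (|η| - 1), mul_nonneg (abs_nonneg κ) (sq_nonneg η)]
  rw [sideband, norm_mul, Complex.norm_real, Real.norm_eq_abs, ← mul_assoc]
  gcongr

lemma exists_weight_mul_norm_sideband_sq_le (s : ℝ) (hκ : κ ≠ 0) (A : ℝ → ℂ) :
    ∃ K : ℝ, 0 ≤ K ∧ ∀ ρ : ℝ, 1 ≤ ρ → ∀ ξ : ℝ,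
      ((1 + ξ ^ 2) / ρ ^ 2) ^ s * ‖sideband κ ρ A ξ‖ ^ 2 ≤
        K * ((1 + (ξ - κ * ρ) ^ 2) ^ (|s| + 2) * ‖A (ξ - κ * ρ)‖ ^ 2) := by
  obtain ⟨K, hK, hweight⟩ := exists_rescaled_weight_le s hκ
  refine ⟨K * (1 + 2 * |κ|) ^ 2, by positivity, fun ρ hρ ξ => ?_⟩
  set η := ξ - κ * ρ
  calc ((1 + ξ ^ 2) / ρ ^ 2) ^ s * ‖sideband κ ρ A ξ‖ ^ 2
      ≤ (K * (1 + η ^ 2) ^ |s|) * ((1 + 2 * |κ|) * ((1 + η ^ 2) * ‖A η‖)) ^ 2 := by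
        gcongr
        · exact hweight ρ hρ ξ
        · exact norm_sideband_le hρ κ A ξ
    _ = K * (1 + 2 * |κ|) ^ 2 * ((1 + η ^ 2) ^ (|s| + 2) * ‖A η‖ ^ 2) := by
        rw [Real.rpow_add (by positivity), Real.rpow_two]
        ring

lemma exists_interactionDensity_le (s : ℝ) (hκ : κ ≠ 0) (hB : ∀ ξ, ‖m ξ‖ ≤ B) (A : ℝ → ℂ) :
    ∃ K : ℝ, ∀ ρ : ℝ, 1 ≤ ρ → ∀ ξ : ℝ, interactionDensity s κ ρ m A ξ ≤
      K * ((1 + (ξ - κ * ρ) ^ 2) ^ (|s| + 2) * ‖A (ξ - κ * ρ)‖ ^ 2 +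
        (1 + (ξ + κ * ρ) ^ 2) ^ (|s| + 2) * ‖A (ξ + κ * ρ)‖ ^ 2) := by
  obtain ⟨K₁, hK₁, hright⟩ := exists_weight_mul_norm_sideband_sq_le s hκ A
  obtain ⟨K₂, hK₂, hleft⟩ := exists_weight_mul_norm_sideband_sq_le s (neg_ne_zero.2 hκ) A
  refine ⟨2 * B ^ 2 * (K₁ + K₂), fun ρ hρ ξ => ?_⟩
  specialize hright ρ hρ ξ
  specialize hleft ρ hρ ξ
  simp only [neg_mul, sub_neg_eq_add] at hleft
  set w := ((1 + ξ ^ 2) / ρ ^ 2) ^ s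
  set W₁ := (1 + (ξ - κ * ρ) ^ 2) ^ (|s| + 2) * ‖A (ξ - κ * ρ)‖ ^ 2
  set W₂ := (1 + (ξ + κ * ρ) ^ 2) ^ (|s| + 2) * ‖A (ξ + κ * ρ)‖ ^ 2
  have hnorm : ‖sideband κ ρ A ξ - sideband (-κ) ρ A ξ‖ ^ 2 ≤
      2 * (‖sideband κ ρ A ξ‖ ^ 2 + ‖sideband (-κ) ρ A ξ‖ ^ 2) :=
    (pow_le_pow_left₀ (norm_nonneg _) (norm_sub_le _ _) 2).trans add_sq_le
  calc interactionDensity s κ ρ m A ξ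
      = w * (‖m (ξ / ρ)‖ ^ 2 * ‖sideband κ ρ A ξ - sideband (-κ) ρ A ξ‖ ^ 2) := by
        rw [interactionDensity, norm_mul, mul_pow]
    _ ≤ w * (B ^ 2 * (2 * (‖sideband κ ρ A ξ‖ ^ 2 + ‖sideband (-κ) ρ A ξ‖ ^ 2))) := by
        gcongr
        exact hB _
    _ = 2 * B ^ 2 * (w * ‖sideband κ ρ A ξ‖ ^ 2 + w * ‖sideband (-κ) ρ A ξ‖ ^ 2) := by ring
    _ ≤ 2 * B ^ 2 * ((K₁ + K₂) * W₁ + (K₁ + K₂) * W₂) := by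
        refine mul_le_mul_of_nonneg_left (add_le_add (hright.trans ?_) (hleft.trans ?_))
          (by positivity)
        · exact mul_le_mul_of_nonneg_right (le_add_of_nonneg_right hK₂) (by positivity)
        · exact mul_le_mul_of_nonneg_right (le_add_of_nonneg_left hK₁) (by positivity)
    _ = 2 * B ^ 2 * (K₁ + K₂) * (W₁ + W₂) := by ring

lemma exists_integral_interactionDensity_le (s : ℝ) (hκ : κ ≠ 0) (hm : Measurable m)
    (hB : ∀ ξ, ‖m ξ‖ ≤ B) (A : 𝓢(ℝ, ℂ)) :
    ∃ M : ℝ, ∀ ρ : ℝ, 1 ≤ ρ → Integrable (interactionDensity s κ ρ m A) ∧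
      ∫ ξ, interactionDensity s κ ρ m A ξ ≤ M := by
  obtain ⟨K, hK⟩ := exists_interactionDensity_le s hκ hB A
  let W : ℝ → ℝ := fun η => (1 + η ^ 2) ^ (|s| + 2) * ‖A η‖ ^ 2
  have hW : Integrable W := integrable_one_add_sq_rpow_mul_norm_sq A (|s| + 2)
  refine ⟨K * ((∫ η, W η) + ∫ η, W η), fun ρ hρ => ?_⟩
  have hright : Integrable fun ξ => W (ξ - κ * ρ) := hW.comp_sub_right _
  have hleft : Integrable fun ξ => W (ξ + κ * ρ) := hW.comp_add_right _
  have hdom : Integrable fun ξ => K * (W (ξ - κ * ρ) + W (ξ + κ * ρ)) :=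
    (hright.add hleft).const_mul K
  have hint : Integrable (interactionDensity s κ ρ m A) := by
    refine hdom.mono' (measurable_interactionDensity s κ ρ hm
      A.continuous.measurable).aestronglyMeasurable (ae_of_all _ fun ξ => ?_)
    rw [Real.norm_of_nonneg (interactionDensity_nonneg s κ ρ m A ξ)]
    exact hK ρ hρ ξ
  refine ⟨hint, (integral_mono hint hdom (hK ρ hρ)).trans_eq ?_⟩
  rw [integral_const_mul, integral_add hright hleft, integral_sub_right_eq_self W,
    integral_add_right_eq_self W]

lemma tendsto_add_mul_div_atTop (η κ : ℝ) :
    Tendsto (fun ρ : ℝ => (η + κ * ρ) / ρ) atTop (𝓝 κ) := by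
  have h : Tendsto (fun ρ : ℝ => η / ρ + κ) atTop (𝓝 (0 + κ)) :=
    (tendsto_id.const_div_atTop η).add_const κ
  rw [zero_add] at h
  refine h.congr' ?_
  filter_upwards [eventually_ne_atTop 0] with ρ hρ
  field_simp

lemma tendsto_sideband_right (κ η : ℝ) (A : ℝ → ℂ) :
    Tendsto (fun ρ => sideband κ ρ A (η + κ * ρ)) atTop (𝓝 (2 * κ * A η)) := by
  have hfactor := ((tendsto_add_mul_div_atTop η (2 * κ)).ofReal).mul_const (A η)
  push_cast at hfactor
  refine hfactor.congr fun ρ => ?_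
  rw [sideband, add_sub_cancel_right]
  push_cast
  ring

lemma tendsto_sideband_left (κ η : ℝ) {A : ℝ → ℂ} {M : ℝ} (hA : ∀ ξ, ‖A ξ‖ ≤ M) :
    Tendsto (fun ρ => sideband (-κ) ρ A (η + κ * ρ)) atTop (𝓝 0) := by
  have hzero : Tendsto (fun ρ : ℝ => ‖η / ρ‖ * M) atTop (𝓝 0) := by
    simpa using ((tendsto_id.const_div_atTop η).norm).mul_const M
  refine squeeze_zero_norm (fun ρ => ?_) hzero
  rw [sideband, norm_mul, Complex.norm_real, neg_mul, add_neg_cancel_right, inv_mul_eq_div]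
  gcongr
  exact hA _

lemma tendsto_interactionDensity (s : ℝ) (hκ : κ ≠ 0) (hmκ : ContinuousAt m κ) {M : ℝ}
    (hA : ∀ ξ, ‖A ξ‖ ≤ M) (η : ℝ) :
    Tendsto (fun ρ => interactionDensity s κ ρ m A (η + κ * ρ)) atTop
      (𝓝 ((κ ^ 2) ^ s * ‖m κ * (2 * κ * A η)‖ ^ 2)) := by
  have hratio := tendsto_add_mul_div_atTop η κ
  have hweight : Tendsto (fun ρ => (1 + (η + κ * ρ) ^ 2) / ρ ^ 2) atTop (𝓝 (κ ^ 2)) := by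
    have hone : Tendsto (fun ρ : ℝ => 1 / ρ ^ 2) atTop (𝓝 0) :=
      (tendsto_pow_atTop two_ne_zero).const_div_atTop 1
    have hsum := hone.add (hratio.pow 2)
    rw [zero_add] at hsum
    exact hsum.congr fun ρ => by rw [div_pow, ← add_div]
  have hsidebands := (tendsto_sideband_right κ η A).sub (tendsto_sideband_left κ η hA)
  rw [sub_zero] at hsidebands
  exact (hweight.rpow_const (Or.inl (by positivity))).mul
    (((hmκ.tendsto.comp hratio).mul hsidebands).norm.pow 2)

lemma exists_pos_eventually_le_integral_interactionDensity (s : ℝ) (hκ : κ ≠ 0) (hm : Measurable m)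
    (hB : ∀ ξ, ‖m ξ‖ ≤ B) (hmκ : ContinuousAt m κ) (hmκ0 : m κ ≠ 0) {A : 𝓢(ℝ, ℂ)} (hA : A ≠ 0) :
    ∃ c : ℝ, 0 < c ∧ ∀ᶠ ρ in atTop, c ≤ ∫ ξ, interactionDensity s κ ρ m A ξ := by
  obtain ⟨M, hM⟩ := exists_integral_interactionDensity_le s hκ hm hB A
  obtain ⟨η₀, hη₀⟩ : ∃ η₀, A η₀ ≠ 0 := DFunLike.ne_iff.1 hA
  let profile : ℝ → ℝ := fun η => (κ ^ 2) ^ s * ‖m κ * (2 * κ * A η)‖ ^ 2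
  have hcont : Continuous profile := by
    have := A.continuous
    fun_prop
  have hprofile : Integrable profile := by
    refine (((A.memLp 2).integrable_norm_pow two_ne_zero).const_mul
      ((κ ^ 2) ^ s * (‖m κ‖ * ‖(2 * κ : ℂ)‖) ^ 2)).congr (ae_of_all _ fun η => ?_)
    simp only [profile, norm_mul]
    ring
  have hprofile₀ : profile η₀ ≠ 0 := by
    have hvalue : m κ * (2 * κ * A η₀) ≠ 0 := by simp [hmκ0, hκ, hη₀]
    positivity
  have hpos : 0 < ∫ η, profile η :=
    integral_pos_of_integrable_nonneg_nonzero hcont hprofile (fun η => by positivity) hprofile₀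
  refine ⟨(∫ η, profile η) / 2, half_pos hpos, ?_⟩
  have hfatou := eventually_lt_integral_of_tendsto (l := atTop) (μ := volume)
    (F := fun ρ η => interactionDensity s κ ρ m A (η + κ * ρ))
    (fun ρ => ((measurable_interactionDensity s κ ρ hm A.continuous.measurable).comp
      (measurable_add_const _)).aemeasurable)
    (fun ρ η => interactionDensity_nonneg s κ ρ m A _)
    ((eventually_ge_atTop 1).mono fun ρ hρ => (hM ρ hρ).1.comp_add_right _) hprofile
    (tendsto_interactionDensity s hκ hmκ (SchwartzMap.norm_le_seminorm ℂ A)) (half_lt_self hpos)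
  filter_upwards [hfatou] with ρ hρ
  rw [integral_add_right_eq_self (interactionDensity s κ ρ m A)] at hρ
  exact hρ.le

end Density

theorem liminf_mult_gn_deriv_fn_general (s : ℝ) {Φ : 𝓢(ℝ, ℂ)} (hΦ : Φ ≠ 0) {κ : ℝ} (hκ : κ ≠ 0)
    {m : ℝ → ℂ} (hm : Measurable m) {B : ℝ} (hB : ∀ ξ, ‖m ξ‖ ≤ B) (hmκ : ContinuousAt m κ)
    (hmκ0 : m κ ≠ 0) {ι : Type*} {l : Filter ι} [l.NeBot] {ρ : ι → ℝ} (hρ : Tendsto ρ l atTop) :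
    ∃ C : ℝ, 0 < C ∧
      C ≤ liminf (fun i => multSobolevNorm s (fun ξ => m (ξ / ρ i))
        (packetInteraction s κ (ρ i) Φ)) l := by
  let Φsq : 𝓢(ℝ, ℂ) := SchwartzMap.pairing (ContinuousLinearMap.mul ℂ ℂ) Φ Φ
  have hΦsq : ⇑Φsq = fun x => Φ x ^ 2 := funext fun x => (sq (Φ x)).symm
  have hΦsq0 : Φsq ≠ 0 := by
    obtain ⟨x, hx⟩ := DFunLike.ne_iff.1 hΦ
    refine DFunLike.ne_iff.2 ⟨x, ?_⟩
    rw [hΦsq]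
    exact pow_ne_zero 2 hx
  obtain ⟨A, hA⟩ := exists_schwartzMap_eq_fourierT Φsq
  have hA0 : A ≠ 0 := by
    rintro rfl
    exact fourierT_ne_zero hΦsq0 hA.symm
  have hnorm : ∀ r : ℝ, 0 < r → multSobolevNorm s (fun ξ => m (ξ / r))
      (packetInteraction s κ r Φ) = √(∫ ξ, interactionDensity s κ r m A ξ) / 4 := by
    intro r hr
    rw [multSobolevNorm_packetInteraction Φ.differentiable (hΦsq ▸ Φsq.integrable)
      (hΦsq ▸ (SchwartzMap.derivCLM ℂ ℂ Φsq).integrable) s κ hr m, hA, hΦsq]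
  obtain ⟨M, hM⟩ := exists_integral_interactionDensity_le s hκ hm hB A
  obtain ⟨c, hc, hlower⟩ :=
    exists_pos_eventually_le_integral_interactionDensity s hκ hm hB hmκ hmκ0 hA0
  refine ⟨√c / 4, by positivity, le_liminf_of_le ?_ ?_⟩
  · refine isCoboundedUnder_ge_of_eventually_le l (x := √M / 4) ?_
    filter_upwards [hρ.eventually_ge_atTop 1] with i hi
    rw [hnorm _ (one_pos.trans_le hi)]
    gcongr
    exact (hM _ hi).2
  · filter_upwards [hρ.eventually_gt_atTop 0, hρ.eventually hlower] with i hi hci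
    rw [hnorm _ hi]
    gcongr

/-- The symbol of `∂_x²(1 − ∂_x²)^{-1}`; replacing `ξ` by `αξ` gives the symbol of
`α²∂_x²(1 − α²∂_x²)^{-1}`. -/
noncomputable def resolventSymbol (ξ : ℝ) : ℂ := ((-ξ ^ 2 / (1 + ξ ^ 2) : ℝ) : ℂ)

lemma continuous_resolventSymbol : Continuous resolventSymbol :=
  Complex.continuous_ofReal.comp
    (Continuous.div (by fun_prop) (by fun_prop) fun ξ => by positivity)

lemma norm_resolventSymbol_le_one (ξ : ℝ) : ‖resolventSymbol ξ‖ ≤ 1 := by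
  rw [resolventSymbol, Complex.norm_real, neg_div, norm_neg, Real.norm_of_nonneg (by positivity),
    div_le_one (by positivity)]
  linarith

lemma resolventSymbol_ne_zero {ξ : ℝ} (hξ : ξ ≠ 0) : resolventSymbol ξ ≠ 0 := by
  rw [resolventSymbol, Complex.ofReal_ne_zero]
  exact div_ne_zero (neg_ne_zero.2 (pow_ne_zero 2 hξ)) (by positivity)

lemma two_rpow_neg_natCast (n : ℕ) : (2 : ℝ) ^ (-(n : ℝ)) = (2 ^ n)⁻¹ := by
  rw [Real.rpow_neg zero_le_two, Real.rpow_natCast]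

lemma resolventSymbol_div_two_pow (n : ℕ) (ξ : ℝ) :
    resolventSymbol (ξ / 2 ^ n) = ((-(((2 : ℝ) ^ (-(n : ℝ))) ^ 2 * ξ ^ 2) /
      (1 + ((2 : ℝ) ^ (-(n : ℝ))) ^ 2 * ξ ^ 2) : ℝ) : ℂ) := by
  rw [resolventSymbol, two_rpow_neg_natCast, ← mul_pow, inv_mul_eq_div]

lemma wavePacket_two_pow (s : ℝ) (φ : ℝ → ℂ) (n : ℕ) :
    wavePacket s (17 / 12) (2 ^ n) φ = fn s φ n := by
  have hscale : ((2 : ℝ) ^ n) ^ (-s) = 2 ^ (-(n : ℝ) * s) := by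
    rw [← Real.rpow_natCast_mul zero_le_two, mul_neg, neg_mul]
  ext x
  rw [wavePacket, fn, hscale]

lemma packetInteraction_two_pow (s : ℝ) (φ : ℝ → ℂ) (n : ℕ) :
    packetInteraction s (17 / 12) (2 ^ n) φ = fun x => gn φ n x * deriv (fn s φ n) x := by
  ext x
  rw [packetInteraction, wavePacket_two_pow, gn, two_rpow_neg_natCast]

/-- With `α_n = 2^{-n}`, there is `C = C(φ) > 0` such that
`liminf_{n→∞} ‖α_n²∂_x²(1 − α_n²∂_x²)^{-1}(g_n ∂_x f_n)‖_{H^s} ≥ C`, where the operator is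
the Fourier multiplier with symbol `−α_n²ξ²/(1 + α_n²ξ²)`. -/
theorem liminf_mult_gn_deriv_fn (s : ℝ) (φhat : ℝ → ℝ) (φ : ℝ → ℂ)
    (hφ : CutoffPair φhat φ) :
    ∃ C : ℝ, 0 < C ∧
      C ≤ Filter.liminf
        (fun n : ℕ =>
          multSobolevNorm s
            (fun ξ : ℝ => ((-(((2 : ℝ) ^ (-(n : ℝ))) ^ 2 * ξ ^ 2) /
              (1 + ((2 : ℝ) ^ (-(n : ℝ))) ^ 2 * ξ ^ 2) : ℝ) : ℂ))
            (fun x => gn φ n x * deriv (fn s φ n) x))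
        Filter.atTop := by
  obtain ⟨Φ, rfl⟩ := hφ.exists_schwartzMap
  simpa only [resolventSymbol_div_two_pow, packetInteraction_two_pow] using
    liminf_mult_gn_deriv_fn_general s (fun hΦ => hφ.ne_zero (by rw [hΦ]; rfl))
      (by norm_num : (17 / 12 : ℝ) ≠ 0) continuous_resolventSymbol.measurable
      norm_resolventSymbol_le_one continuous_resolventSymbol.continuousAt
      (resolventSymbol_ne_zero (by norm_num)) (tendsto_pow_atTop_atTop_of_one_lt one_lt_two)
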